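/- arXiv:1808.04747 — 2 statements merged into one kernel-verified Lean document; each statement's English description precedes it below -/
import Mathlib

section
/- Error estimate for the iterated optimal stopping approximation: suppose F is concave, let c > 0, let u be the solution of the QVI with switching cost c, and let (u^n)_{n≥0} be the iterated optimal stopping sequence for switching cost c. Then for any κ ∈ (0, c) and every n ≥ 0 (with the convention 0^0 = 1), 0 ≤ u − u^n ≤ L_κ(1 − μ)^n/μ componentwise, where L_κ = (2‖F(0)‖ + κ)/γ and μ = min(1, γκ/(2‖F(0)‖ + κ)). -/
open Filter Topology

noncomputable section

/-- A monotone system with constant `γ`: whenever `u i l - v i l` is the (nonnegative)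
maximum of all differences, `F u i l - F v i l ≥ γ (u i l - v i l)`. -/
def IsMonotoneSystem {N d : ℕ} (γ : ℝ)
    (F : (Fin d → Fin N → ℝ) → Fin d → Fin N → ℝ) : Prop :=
  ∀ u v : Fin d → Fin N → ℝ, ∀ i : Fin d, ∀ l : Fin N,
    (∀ (j : Fin d) (k : Fin N), u j k - v j k ≤ u i l - v i l) →
    0 ≤ u i l - v i l →
    γ * (u i l - v i l) ≤ F u i l - F v i l

/-- The intervention operator `(M_i u)_l = max_{j ≠ i} (u j l - c)`. -/
def Mop {N d : ℕ} (c : ℝ) (u : Fin d → Fin N → ℝ) (i : Fin d) (l : Fin N) : ℝ :=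
  ⨆ j : {j : Fin d // j ≠ i}, (u j l - c)

/-- The sup-norm `‖u‖ = max_{i,l} |u i l|`. -/
def supNorm {N d : ℕ} (u : Fin d → Fin N → ℝ) : ℝ :=
  ⨆ p : Fin d × Fin N, |u p.1 p.2|

/-- A penalty function: continuous, non-decreasing, vanishing on `(-∞,0]` and
positive on `(0,∞)`. -/
def IsPenaltyFunction (π : ℝ → ℝ) : Prop :=
  Continuous π ∧ Monotone π ∧ (∀ y : ℝ, y ≤ 0 → π y = 0) ∧ (∀ y : ℝ, 0 < y → 0 < π y)

/-- A concave system: each `F_i` is concave (componentwise). -/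
def IsConcaveSystem {N d : ℕ}
    (F : (Fin d → Fin N → ℝ) → Fin d → Fin N → ℝ) : Prop :=
  ∀ (i : Fin d) (u v : Fin d → Fin N → ℝ) (θ : ℝ), 0 ≤ θ → θ ≤ 1 → ∀ l : Fin N,
    θ * F u i l + (1 - θ) * F v i l ≤ F (fun j k => θ * u j k + (1 - θ) * v j k) i l

/-!
The constants `±‖F 0‖ / γ` are a super- and a subsolution, so by comparison `u` and all iterates lie
between `-a` and `a := ‖F 0‖ / γ`. Comparison also gives `U n ≤ u`. The error decays because
interpolating with the constant supersolution `a` gains on the obstacle: if `u ≤ t a + (1 - t) U n`,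
then monotonicity and convexity of the intervention operator `M` give
`M u ≤ t (a - c) + (1 - t) U (n + 1)`, and the gain `t c` pays for replacing the weight `t` by
`s := t (1 - μ)`, as long as `μ * 2a ≤ c`. By concavity of `F`, the interpolant
`s a + (1 - s) U (n + 1)` is a supersolution, so the improved weight passes from the obstacle
to `u`.
-/

/-- A monotone system on a single index set; `IsMonotoneSystem` is the case of pairs of indices. -/
def MonotoneAtMax {ι : Type*} (γ : ℝ) (F : (ι → ℝ) → ι → ℝ) : Prop :=
  ∀ u v : ι → ℝ, ∀ p, (∀ q, u q - v q ≤ u p - v p) → 0 ≤ u p - v p →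
    γ * (u p - v p) ≤ F u p - F v p

/-- `u` solves the obstacle problem for `F` with obstacle `ψ`. The QVI is the implicit obstacle
problem with `ψ = M u`. -/
def SolvesObstacle {ι : Type*} (F : (ι → ℝ) → ι → ℝ) (ψ u : ι → ℝ) : Prop :=
  F u ⊓ (u - ψ) = 0

/-- An abstract intervention operator whose every intervention costs at least `c`. -/
structure IsInterventionOperator {ι : Type*} (c : ℝ) (M : (ι → ℝ) → ι → ℝ) : Prop where
  monotone : Monotone M
  convexOn : ConvexOn ℝ Set.univ M
  map_const_le : ∀ a : ℝ, M (Function.const ι a) ≤ Function.const ι (a - c)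

/-- `U` is the iterated optimal stopping sequence of `F` with intervention operator `M`. -/
structure IsIteratedOptimalStopping {ι : Type*} (F M : (ι → ℝ) → ι → ℝ) (U : ℕ → ι → ℝ) :
    Prop where
  zero : F (U 0) = 0
  succ : ∀ m, SolvesObstacle F (M (U m)) (U (m + 1))

section General

variable {ι : Type*} {γ c : ℝ} {F M : (ι → ℝ) → ι → ℝ} {ψ u v w : ι → ℝ} {U : ℕ → ι → ℝ}

namespace MonotoneAtMax

theorem le_of_forall_map_le_or_le [Finite ι] (hF : MonotoneAtMax γ F) (hγ : 0 < γ)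
    (h : ∀ p, F v p ≤ F w p ∨ v p ≤ w p) : v ≤ w := by
  intro q
  have : Nonempty ι := ⟨q⟩
  obtain ⟨p, hmax⟩ := Finite.exists_max (v - w)
  suffices v p ≤ w p from sub_nonpos.1 ((hmax q).trans (sub_nonpos.2 this))
  refine (h p).elim (fun hFp => ?_) id
  by_contra! hlt
  have hpos : 0 < v p - w p := sub_pos.2 hlt
  linarith [hF v w p hmax hpos.le, mul_pos hγ hpos]

theorem le_of_map_le [Finite ι] (hF : MonotoneAtMax γ F) (hγ : 0 < γ) (h : F v ≤ F w) : v ≤ w :=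
  hF.le_of_forall_map_le_or_le hγ fun p => .inl (h p)

theorem map_const_nonneg [Fintype ι] (hF : MonotoneAtMax γ F) {a : ℝ} (ha : 0 ≤ a)
    (hFa : ‖F 0‖ ≤ γ * a) : 0 ≤ F (Function.const ι a) := by
  intro p
  have hmono := hF (Function.const ι a) 0 p (by simp) (by simpa using ha)
  have hnorm := (abs_le.1 (norm_le_pi_norm (F 0) p)).1
  simp only [Function.const_apply, Pi.zero_apply, sub_zero] at hmono ⊢
  linarith

theorem map_const_neg_nonpos [Fintype ι] (hF : MonotoneAtMax γ F) {a : ℝ} (ha : 0 ≤ a)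
    (hFa : ‖F 0‖ ≤ γ * a) : F (Function.const ι (-a)) ≤ 0 := by
  intro p
  have hmono := hF 0 (Function.const ι (-a)) p (by simp) (by simpa using ha)
  have hnorm := (abs_le.1 (norm_le_pi_norm (F 0) p)).2
  simp only [Function.const_apply, Pi.zero_apply, zero_sub, neg_neg] at hmono ⊢
  linarith

end MonotoneAtMax

namespace SolvesObstacle

theorem map_nonneg (h : SolvesObstacle F ψ u) : 0 ≤ F u :=
  h.ge.trans inf_le_left

theorem obstacle_le (h : SolvesObstacle F ψ u) : ψ ≤ u :=
  sub_nonneg.1 (h.ge.trans inf_le_right)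

theorem map_eq_zero_or_eq_obstacle (h : SolvesObstacle F ψ u) (p : ι) :
    F u p = 0 ∨ u p = ψ p := by
  have hp : min (F u p) (u p - ψ p) = 0 := congrFun h p
  exact (min_choice (F u p) (u p - ψ p)).imp (·.symm.trans hp)
    fun heq => sub_eq_zero.1 (heq.symm.trans hp)

theorem le_supersolution [Finite ι] (hu : SolvesObstacle F ψ u) (hF : MonotoneAtMax γ F)
    (hγ : 0 < γ) (hFw : 0 ≤ F w) (hψw : ψ ≤ w) : u ≤ w :=
  hF.le_of_forall_map_le_or_le hγ fun p =>
    (hu.map_eq_zero_or_eq_obstacle p).imp (fun h => h.trans_le (hFw p))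
      fun h => h.trans_le (hψw p)

-- With `b = max u`, the constant `max a (b - c)` is a supersolution, so `b ≤ max a (b - c)`.
theorem le_const [Fintype ι] (hu : SolvesObstacle F (M u) u) (hF : MonotoneAtMax γ F) (hγ : 0 < γ)
    (hM : IsInterventionOperator c M) (hc : 0 < c) {a : ℝ} (ha : 0 ≤ a) (hFa : ‖F 0‖ ≤ γ * a) :
    u ≤ Function.const ι a := by
  intro q
  have : Nonempty ι := ⟨q⟩
  obtain ⟨p, hmax⟩ := Finite.exists_max u
  have hle_max : a ≤ max a (u p - c) := le_max_left _ _
  have hobstacle : M u ≤ Function.const ι (max a (u p - c)) := fun r =>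
    (hM.monotone (show u ≤ Function.const ι (u p) from hmax) r).trans
      ((hM.map_const_le (u p) r).trans (le_max_right _ _))
  have hsuper : 0 ≤ F (Function.const ι (max a (u p - c))) :=
    hF.map_const_nonneg (ha.trans hle_max) (hFa.trans (by gcongr))
  have hp : u p ≤ max a (u p - c) := hu.le_supersolution hF hγ hsuper hobstacle p
  exact (hmax q).trans ((le_max_iff.1 hp).resolve_right (by linarith))

theorem le_interpolation [Finite ι] (hu : SolvesObstacle F (M u) u)
    (hw : SolvesObstacle F (M v) w) (hF : MonotoneAtMax γ F) (hγ : 0 < γ)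
    (hconc : ConcaveOn ℝ Set.univ F) (hM : IsInterventionOperator c M) {a t μ : ℝ}
    (hFa : 0 ≤ F (Function.const ι a)) (ht : t ∈ Set.Icc 0 1) (hμ : μ ∈ Set.Icc 0 1)
    (hgap : ∀ p, μ * (a - w p) ≤ c) (huv : u ≤ t • Function.const ι a + (1 - t) • v) :
    u ≤ (t * (1 - μ)) • Function.const ι a + (1 - t * (1 - μ)) • w := by
  obtain ⟨ht0, ht1⟩ := ht
  have hs0 : 0 ≤ t * (1 - μ) := mul_nonneg ht0 (sub_nonneg.2 hμ.2)
  have hs1 : t * (1 - μ) ≤ 1 := mul_le_one₀ ht1 (sub_nonneg.2 hμ.2) (sub_le_self _ hμ.1)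
  have ht1' : 0 ≤ 1 - t := sub_nonneg.2 ht1
  have hs1' : 0 ≤ 1 - t * (1 - μ) := sub_nonneg.2 hs1
  refine hu.le_supersolution hF hγ ?supersolution ?obstacle
  case supersolution =>
    calc
      0 ≤ (t * (1 - μ)) • F (Function.const ι a) + (1 - t * (1 - μ)) • F w :=
        add_nonneg (smul_nonneg hs0 hFa) (smul_nonneg hs1' hw.map_nonneg)
      _ ≤ F ((t * (1 - μ)) • Function.const ι a + (1 - t * (1 - μ)) • w) :=
        hconc.2 trivial trivial hs0 hs1' (add_sub_cancel _ _)
  case obstacle =>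
    calc
      M u ≤ M (t • Function.const ι a + (1 - t) • v) := hM.monotone huv
      _ ≤ t • M (Function.const ι a) + (1 - t) • M v :=
        hM.convexOn.2 trivial trivial ht0 ht1' (add_sub_cancel _ _)
      _ ≤ t • Function.const ι (a - c) + (1 - t) • w := by
        gcongr
        exacts [hM.map_const_le a, hw.obstacle_le]
      _ ≤ (t * (1 - μ)) • Function.const ι a + (1 - t * (1 - μ)) • w := fun p => by
        have := mul_le_mul_of_nonneg_left (hgap p) ht0
        simp only [Pi.add_apply, Pi.smul_apply, Function.const_apply, smul_eq_mul]
        linarith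

end SolvesObstacle

namespace IsIteratedOptimalStopping

theorem map_nonneg (hU : IsIteratedOptimalStopping F M U) : ∀ n, 0 ≤ F (U n)
  | 0 => hU.zero.ge
  | m + 1 => (hU.succ m).map_nonneg

theorem const_neg_le [Fintype ι] (hU : IsIteratedOptimalStopping F M U) (hF : MonotoneAtMax γ F)
    (hγ : 0 < γ) {a : ℝ} (ha : 0 ≤ a) (hFa : ‖F 0‖ ≤ γ * a) (n : ℕ) :
    Function.const ι (-a) ≤ U n :=
  hF.le_of_map_le hγ ((hF.map_const_neg_nonpos ha hFa).trans (hU.map_nonneg n))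

theorem le_solution [Finite ι] (hU : IsIteratedOptimalStopping F M U) (hF : MonotoneAtMax γ F)
    (hγ : 0 < γ) (hM : Monotone M) (hu : SolvesObstacle F (M u) u) (n : ℕ) : U n ≤ u := by
  induction n with
  | zero => exact hF.le_of_map_le hγ (hU.zero.trans_le hu.map_nonneg)
  | succ m ih =>
    exact (hU.succ m).le_supersolution hF hγ hu.map_nonneg ((hM ih).trans hu.obstacle_le)

theorem solution_le_interpolation [Fintype ι] (hU : IsIteratedOptimalStopping F M U)
    (hF : MonotoneAtMax γ F) (hγ : 0 < γ) (hconc : ConcaveOn ℝ Set.univ F)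
    (hM : IsInterventionOperator c M) (hc : 0 < c) (hu : SolvesObstacle F (M u) u) {a μ : ℝ}
    (ha : 0 ≤ a) (hFa : ‖F 0‖ ≤ γ * a) (hμ : μ ∈ Set.Icc 0 1) (hμc : μ * (2 * a) ≤ c) (n : ℕ) :
    u ≤ (1 - μ) ^ n • Function.const ι a + (1 - (1 - μ) ^ n) • U n := by
  have hμ' : 0 ≤ 1 - μ := sub_nonneg.2 hμ.2
  induction n with
  | zero => simpa using hu.le_const hF hγ hM hc ha hFa
  | succ m ih =>
    have hgap (p : ι) : μ * (a - U (m + 1) p) ≤ c := by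
      have hlow : -a ≤ U (m + 1) p := hU.const_neg_le hF hγ ha hFa (m + 1) p
      exact (mul_le_mul_of_nonneg_left (by linarith) hμ.1).trans hμc
    exact hu.le_interpolation (hU.succ m) hF hγ hconc hM (hF.map_const_nonneg ha hFa)
      ⟨pow_nonneg hμ' m, pow_le_one₀ hμ' (sub_le_self _ hμ.1)⟩ hμ hgap ih

end IsIteratedOptimalStopping

theorem iterated_optimal_stopping_error_general [Fintype ι] (hγ : 0 < γ) (hF : MonotoneAtMax γ F)
    (hconc : ConcaveOn ℝ Set.univ F) (hc : 0 < c) (hM : IsInterventionOperator c M)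
    (hu : SolvesObstacle F (M u) u) (hU : IsIteratedOptimalStopping F M U) {μ : ℝ}
    (hμ : μ ∈ Set.Icc 0 1) (hμc : μ * (2 * ‖F 0‖ / γ) ≤ c) (n : ℕ) :
    U n ≤ u ∧ ∀ p, u p - U n p ≤ (1 - μ) ^ n * (2 * ‖F 0‖ / γ) := by
  refine ⟨hU.le_solution hF hγ hM.monotone hu n, fun p => ?_⟩
  rw [mul_div_assoc] at hμc ⊢
  have ha : 0 ≤ ‖F 0‖ / γ := by positivity
  have hFa : ‖F 0‖ ≤ γ * (‖F 0‖ / γ) := (mul_div_cancel₀ _ hγ.ne').ge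
  have hlow : -(‖F 0‖ / γ) ≤ U n p := hU.const_neg_le hF hγ ha hFa n p
  have hup := hU.solution_le_interpolation hF hγ hconc hM hc hu ha hFa hμ hμc n p
  simp only [Pi.add_apply, Pi.smul_apply, Function.const_apply, smul_eq_mul] at hup
  calc
    u p - U n p ≤ (1 - μ) ^ n * (‖F 0‖ / γ - U n p) := by linarith
    _ ≤ (1 - μ) ^ n * (2 * (‖F 0‖ / γ)) :=
      mul_le_mul_of_nonneg_left (by linarith) (pow_nonneg (sub_nonneg.2 hμ.2) n)

end General

/-- A system with two indices regarded as a system indexed by pairs, so that the results for a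
single index set apply to it. -/
def flatten {α β : Type*} (F : (α → β → ℝ) → α → β → ℝ) (w : α × β → ℝ) : α × β → ℝ :=
  Function.uncurry (F (Function.curry w))

section Flatten

variable {N d : ℕ} {γ c : ℝ} {F : (Fin d → Fin N → ℝ) → Fin d → Fin N → ℝ}

theorem IsMonotoneSystem.monotoneAtMax_flatten (hF : IsMonotoneSystem γ F) :
    MonotoneAtMax γ (flatten F) :=
  fun u v p hmax => hF (Function.curry u) (Function.curry v) p.1 p.2 fun j k => hmax (j, k)

theorem IsConcaveSystem.concaveOn_flatten (hF : IsConcaveSystem F) :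
    ConcaveOn ℝ Set.univ (flatten F) := by
  refine ⟨convex_univ, fun u _ v _ s t hs ht hst p => ?_⟩
  obtain rfl : t = 1 - s := eq_sub_of_add_eq' hst
  exact hF p.1 (Function.curry u) (Function.curry v) s hs (sub_nonneg.1 ht) p.2

theorem supNorm_eq_norm_uncurry (u : Fin d → Fin N → ℝ) :
    supNorm u = ‖Function.uncurry u‖ :=
  le_antisymm (Real.iSup_le (norm_le_pi_norm (Function.uncurry u)) (norm_nonneg _)) <|
    (pi_norm_le_iff_of_nonneg (Real.iSup_nonneg fun _ => abs_nonneg _)).2 fun p =>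
      le_ciSup (f := fun p : Fin d × Fin N => |u p.1 p.2|) (Set.finite_range _).bddAbove p

theorem mop_le_iff (hd : 2 ≤ d) {u : Fin d → Fin N → ℝ} {i : Fin d} {l : Fin N} {a : ℝ} :
    Mop c u i l ≤ a ↔ ∀ j ≠ i, u j l - c ≤ a := by
  have : Nontrivial (Fin d) := Fin.nontrivial_iff_two_le.2 hd
  have : Nonempty {j : Fin d // j ≠ i} := nonempty_subtype.2 (exists_ne i)
  exact (ciSup_le_iff (Set.finite_range _).bddAbove).trans Subtype.forall

theorem sub_le_mop (u : Fin d → Fin N → ℝ) {i j : Fin d} (hji : j ≠ i) (l : Fin N) :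
    u j l - c ≤ Mop c u i l :=
  le_ciSup (f := fun j : {j : Fin d // j ≠ i} => u j l - c) (Set.finite_range _).bddAbove ⟨j, hji⟩

theorem isInterventionOperator_flatten_mop (hd : 2 ≤ d) :
    IsInterventionOperator c (flatten (Mop (N := N) (d := d) c)) where
  monotone u v huv p := (mop_le_iff hd).2 fun j hji =>
    (sub_le_sub_right (huv (j, p.2)) c).trans (sub_le_mop (Function.curry v) hji p.2)
  convexOn := by
    refine ⟨convex_univ, fun u _ v _ s t hs ht hst p => (mop_le_iff hd).2 fun j hji => ?_⟩
    calc
      s * u (j, p.2) + t * v (j, p.2) - c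
          = s * (u (j, p.2) - c) + t * (v (j, p.2) - c) := by linear_combination c * hst
      _ ≤ s * Mop c (Function.curry u) p.1 p.2 + t * Mop c (Function.curry v) p.1 p.2 := by
        gcongr
        exacts [sub_le_mop (Function.curry u) hji p.2, sub_le_mop (Function.curry v) hji p.2]
  map_const_le _ _ := (mop_le_iff hd).2 fun _ _ => le_rfl

theorem solvesObstacle_flatten_uncurry {ψ u : Fin d → Fin N → ℝ}
    (h : ∀ i l, min (F u i l) (u i l - ψ i l) = 0) :
    SolvesObstacle (flatten F) (Function.uncurry ψ) (Function.uncurry u) :=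
  funext fun p => h p.1 p.2

theorem isIteratedOptimalStopping_flatten_uncurry
    {M : (Fin d → Fin N → ℝ) → Fin d → Fin N → ℝ} {U : ℕ → Fin d → Fin N → ℝ}
    (hzero : ∀ i l, F (U 0) i l = 0)
    (hsucc : ∀ m i l, min (F (U (m + 1)) i l) (U (m + 1) i l - M (U m) i l) = 0) :
    IsIteratedOptimalStopping (flatten F) (flatten M) fun n => Function.uncurry (U n) where
  zero := funext fun p => hzero p.1 p.2
  succ m := solvesObstacle_flatten_uncurry (hsucc m)

end Flatten

/-- The contraction rate `μ` of the error estimate, with `K` standing for `‖F 0‖`. -/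
def stoppingRate (K γ κ : ℝ) : ℝ :=
  min 1 (γ * κ / (2 * K + κ))

section Rate

variable {K γ κ : ℝ}

theorem stoppingRate_pos (hK : 0 ≤ K) (hγ : 0 < γ) (hκ : 0 < κ) : 0 < stoppingRate K γ κ :=
  lt_min one_pos (by positivity)

theorem stoppingRate_mul_le (hK : 0 ≤ K) (hγ : 0 < γ) (hκ : 0 < κ) :
    stoppingRate K γ κ * (2 * K / γ) ≤ κ :=
  calc
    stoppingRate K γ κ * (2 * K / γ) ≤ γ * κ / (2 * K + κ) * (2 * K / γ) := by
      gcongr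
      exact min_le_right _ _
    _ = κ * (2 * K / (2 * K + κ)) := by field_simp
    _ ≤ κ := mul_le_of_le_one_right hκ.le (div_le_one_of_le₀ (by linarith) (by positivity))

theorem pow_mul_le_stoppingRate_bound (hK : 0 ≤ K) (hγ : 0 < γ) (hκ : 0 < κ) (n : ℕ) :
    (1 - stoppingRate K γ κ) ^ n * (2 * K / γ) ≤
      (2 * K + κ) / γ * (1 - stoppingRate K γ κ) ^ n / stoppingRate K γ κ := by
  have hle_one : stoppingRate K γ κ ≤ 1 := min_le_left _ _
  have hpow : 0 ≤ (1 - stoppingRate K γ κ) ^ n := pow_nonneg (sub_nonneg.2 hle_one) n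
  calc
    (1 - stoppingRate K γ κ) ^ n * (2 * K / γ) ≤
        (2 * K + κ) / γ * (1 - stoppingRate K γ κ) ^ n := by
      rw [mul_comm]
      exact mul_le_mul_of_nonneg_right (by gcongr; linarith) hpow
    _ ≤ _ := le_div_self (by positivity) (stoppingRate_pos hK hγ hκ) hle_one

end Rate

/-- Error estimate for the iterated optimal stopping approximation. -/
theorem iterated_optimal_stopping_error {N d : ℕ} (hN : 1 ≤ N) (hd : 2 ≤ d)
    (γ : ℝ) (hγ : 0 < γ)
    (F : (Fin d → Fin N → ℝ) → Fin d → Fin N → ℝ)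
    (hFcont : Continuous F) (hFmono : IsMonotoneSystem γ F)
    (hFconc : IsConcaveSystem F)
    (c : ℝ) (hc : 0 < c)
    (u : Fin d → Fin N → ℝ)
    (hu : ∀ i l, min (F u i l) (u i l - Mop c u i l) = 0)
    (U : ℕ → Fin d → Fin N → ℝ)
    (hU0 : ∀ i l, F (U 0) i l = 0)
    (hUn : ∀ m : ℕ, ∀ i l, min (F (U (m + 1)) i l) (U (m + 1) i l - Mop c (U m) i l) = 0)
    (κ : ℝ) (hκ0 : 0 < κ) (hκc : κ < c) :
    ∀ n : ℕ, ∀ i l,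
      0 ≤ u i l - U n i l ∧
      u i l - U n i l ≤
        (2 * supNorm (F 0) + κ) / γ *
          (1 - min 1 (γ * κ / (2 * supNorm (F 0) + κ))) ^ n /
          min 1 (γ * κ / (2 * supNorm (F 0) + κ)) := by
  intro n i l
  have hK : 0 ≤ supNorm (F 0) := Real.iSup_nonneg fun _ => abs_nonneg _
  have hnorm : ‖flatten F 0‖ = supNorm (F 0) := (supNorm_eq_norm_uncurry (F 0)).symm
  have hμc := (stoppingRate_mul_le hK hγ hκ0).trans hκc.le
  rw [← hnorm] at hK hμc ⊢
  obtain ⟨hle, herror⟩ := iterated_optimal_stopping_error_general hγ hFmono.monotoneAtMax_flatten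
    hFconc.concaveOn_flatten hc (isInterventionOperator_flatten_mop hd)
    (solvesObstacle_flatten_uncurry hu) (isIteratedOptimalStopping_flatten_uncurry hU0 hUn)
    ⟨(stoppingRate_pos hK hγ hκ0).le, min_le_left _ _⟩ hμc n
  exact ⟨sub_nonneg.2 (hle (i, l)),
    (herror (i, l)).trans (pow_mul_le_stoppingRate_bound hK hγ hκ0 n)⟩
end
end

section
/- Explicit penalty error bound for positive switching cost: suppose F is concave and there exist constants τ > 0 and σ > 0 such that π(y) ≥ τ·y^{1/σ} for all 0 ≤ y ≤ 2‖F(0)‖/γ. Let c > 0, let u be the solution of the QVI with switching cost c, and for ρ > 0 let u^ρ be the solution of the penalized equation with penalty parameter ρ and switching cost c. Then u^ρ ≤ u, and for any κ ∈ (0, c) and every n ≥ 0 (with the convention 0^0 = 1), ‖u − u^ρ‖ ≤ L_κ(1 − μ)^n/μ + (C/(τρ))^σ · n, where L_κ = (2‖F(0)‖ + κ)/γ, μ = min(1, κ/L_κ), and C = sup over {v ∈ ℝ^{N×d} : ‖v‖ ≤ ‖F(0)‖/γ} of ‖F(v)‖. -/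
open Filter Topology

noncomputable section

/-!
For a positive switching cost the QVI satisfies a comparison principle between sub- and
supersolutions: at a node maximizing the difference, and among those maximizing the subsolution,
switching would strictly increase the subsolution, so only the monotone system is active there.

The penalized solution is a subsolution, hence lies below `u`. The lower bound on the penalty
turns the bound `C` on `F uρ` into a bound `ε = (C / (τ ρ)) ^ σ` on the violation of the obstacle
constraint, so `uρ` is also a supersolution, but for the switching cost `c + ε`. A convex
combination of `uρ` with the constant supersolution `‖F 0‖ / γ`, whose switching cost is `0`, lowers
this cost to `c` again. Comparing `u` with it gives `‖u - uρ‖ ≤ ε / (c + ε) * (2 * ‖F 0‖ / γ)`,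
and Bernoulli's inequality weakens this to the bound with `κ` and `n`.
-/

theorem abs_apply_apply_le_norm {ι κ : Type*} [Fintype ι] [Fintype κ] (u : ι → κ → ℝ)
    (i : ι) (k : κ) : |u i k| ≤ ‖u‖ :=
  (norm_le_pi_norm (u i) k).trans (norm_le_pi_norm u i)

theorem norm_le_of_forall_abs_le {ι κ : Type*} [Fintype ι] [Fintype κ] {u : ι → κ → ℝ} {r : ℝ}
    (hr : 0 ≤ r) (hu : ∀ i k, |u i k| ≤ r) : ‖u‖ ≤ r :=
  (pi_norm_le_iff_of_nonneg hr).2 fun i => (pi_norm_le_iff_of_nonneg hr).2 fun k => hu i k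

theorem supNorm_eq_norm {N d : ℕ} (u : Fin d → Fin N → ℝ) : supNorm u = ‖u‖ := by
  refine le_antisymm
    (Real.iSup_le (fun p => abs_apply_apply_le_norm u p.1 p.2) (norm_nonneg _)) ?_
  refine norm_le_of_forall_abs_le (Real.iSup_nonneg fun _ => abs_nonneg _) fun i l => ?_
  exact le_ciSup (f := fun p : Fin d × Fin N => |u p.1 p.2|) (Set.finite_range _).bddAbove (i, l)

theorem norm_le_sSup_image_of_continuous {E G : Type*} [SeminormedAddCommGroup E] [ProperSpace E]
    [SeminormedAddCommGroup G] {f : E → G} (hf : Continuous f) {r : ℝ} {v : E} (hv : ‖v‖ ≤ r) :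
    ‖f v‖ ≤ sSup ((fun w => ‖f w‖) '' {w | ‖w‖ ≤ r}) := by
  have hball : {w : E | ‖w‖ ≤ r} = Metric.closedBall 0 r := by
    ext w
    exact mem_closedBall_zero_iff.symm
  have hbdd : BddAbove ((fun w => ‖f w‖) '' {w | ‖w‖ ≤ r}) :=
    hball ▸ (isCompact_closedBall 0 r).bddAbove_image hf.norm.continuousOn
  exact le_csSup hbdd ⟨v, hv, rfl⟩

theorem le_rpow_of_mul_rpow_one_div_le {τ σ b y : ℝ} (hτ : 0 < τ) (hσ : 0 < σ) (hy : 0 ≤ y)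
    (h : τ * y ^ (1 / σ) ≤ b) : y ≤ (b / τ) ^ σ := by
  have hroot : y ^ σ⁻¹ ≤ b / τ := by
    rwa [le_div_iff₀' hτ, inv_eq_one_div]
  have hb : 0 ≤ b / τ := (Real.rpow_nonneg hy _).trans hroot
  exact (Real.rpow_inv_le_iff_of_pos hy hb hσ).1 hroot

theorem le_mul_one_sub_pow_div_add_mul {x L μ ε : ℝ} (hx : 0 ≤ x) (hxL : x ≤ L) (hμ₀ : 0 < μ)
    (hμ₁ : μ ≤ 1) (hμx : μ * x ≤ ε) (n : ℕ) : x ≤ L * (1 - μ) ^ n / μ + ε * n := by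
  have bernoulli : 1 ≤ (1 - μ) ^ n + n * μ := by
    linarith [one_add_mul_sub_le_pow (show -1 ≤ 1 - μ by linarith) n]
  have hpow : 0 ≤ (1 - μ) ^ n := pow_nonneg (sub_nonneg.2 hμ₁) n
  calc
    x ≤ x * ((1 - μ) ^ n + n * μ) := le_mul_of_one_le_right hx bernoulli
    _ = x * (1 - μ) ^ n + μ * x * n := by ring
    _ ≤ L * (1 - μ) ^ n + ε * n := by gcongr
    _ ≤ L * (1 - μ) ^ n / μ + ε * n := by
      gcongr
      exact le_div_self (mul_nonneg (hx.trans hxL) hpow) hμ₀ hμ₁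

theorem div_add_mul_le_mul_one_sub_pow_div_add_mul {B L κ c ε : ℝ} (hB : 0 ≤ B) (hBL : B ≤ L)
    (hL : 0 < L) (hκ : 0 < κ) (hκc : κ ≤ c) (hε : 0 ≤ ε) (n : ℕ) :
    ε / (c + ε) * B ≤ L * (1 - min 1 (κ / L)) ^ n / min 1 (κ / L) + ε * n := by
  have hcε : 0 < c + ε := by linarith
  have hθ₀ : 0 ≤ ε / (c + ε) := by positivity
  have hθ₁ : ε / (c + ε) ≤ 1 := (div_le_one hcε).2 (by linarith)
  refine le_mul_one_sub_pow_div_add_mul (mul_nonneg hθ₀ hB)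
    ((mul_le_of_le_one_left hB hθ₁).trans hBL) (lt_min one_pos (div_pos hκ hL))
    (min_le_left _ _) ?_ n
  calc
    min 1 (κ / L) * (ε / (c + ε) * B) ≤ κ / L * (ε / (c + ε) * L) := by
      gcongr
      exact min_le_right _ _
    _ = ε / (c + ε) * κ := by field_simp
    _ ≤ ε / (c + ε) * (c + ε) := by
      gcongr
      linarith
    _ = ε := div_mul_cancel₀ ε hcε.ne'

theorem IsPenaltyFunction.nonneg {π : ℝ → ℝ} (hπ : IsPenaltyFunction π) (y : ℝ) : 0 ≤ π y := by
  obtain ⟨-, hmono, hzero, -⟩ := hπ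
  calc
    0 = π (min y 0) := (hzero _ (min_le_right _ _)).symm
    _ ≤ π y := hmono (min_le_left _ _)

section

variable {N d : ℕ} {γ : ℝ} {F : (Fin d → Fin N → ℝ) → Fin d → Fin N → ℝ}

namespace IsMonotoneSystem

theorem le_of_forall_le_or_exists (hγ : 0 < γ) (hF : IsMonotoneSystem γ F)
    {u v : Fin d → Fin N → ℝ}
    (h : ∀ i l, F u i l ≤ F v i l ∨ ∃ j k, u i l < u j k ∧ u i l - v i l ≤ u j k - v j k) :
    u ≤ v := by
  intro i l
  have : Nonempty (Fin d × Fin N) := ⟨(i, l)⟩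
  -- Ties of the difference are broken by `u`, which excludes the second alternative.
  obtain ⟨⟨a, b⟩, hmax⟩ := Finite.exists_max
    fun p : Fin d × Fin N => toLex (u p.1 p.2 - v p.1 p.2, u p.1 p.2)
  simp only [Prod.Lex.toLex_le_toLex, Prod.forall] at hmax
  have hdiff (j : Fin d) (k : Fin N) : u j k - v j k ≤ u a b - v a b :=
    (hmax j k).elim le_of_lt fun htie => htie.1.le
  have hFab : F u a b ≤ F v a b := by
    refine (h a b).resolve_right ?_
    rintro ⟨j, k, hlt, hle⟩
    rcases hmax j k with hlt' | ⟨-, hle'⟩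
    · exact hlt'.not_ge hle
    · exact hle'.not_gt hlt
  by_contra! hlt
  have hpos : 0 < u a b - v a b := (sub_pos.2 hlt).trans_le (hdiff i l)
  linarith [hF u v a b hdiff hpos.le, mul_pos hγ hpos]

theorem const_norm_div_nonneg (hγ : 0 < γ) (hF : IsMonotoneSystem γ F) (i : Fin d) (l : Fin N) :
    0 ≤ F (fun _ _ => ‖F 0‖ / γ) i l := by
  have hincr := hF (fun _ _ => ‖F 0‖ / γ) 0 i l (fun _ _ => le_rfl)
    (by simpa using div_nonneg (norm_nonneg (F 0)) hγ.le)
  rw [Pi.zero_apply, Pi.zero_apply, sub_zero, mul_div_cancel₀ _ hγ.ne'] at hincr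
  linarith [neg_le_of_abs_le (abs_apply_apply_le_norm (F 0) i l)]

theorem const_neg_norm_div_nonpos (hγ : 0 < γ) (hF : IsMonotoneSystem γ F) (i : Fin d)
    (l : Fin N) : F (fun _ _ => -(‖F 0‖ / γ)) i l ≤ 0 := by
  have hincr := hF 0 (fun _ _ => -(‖F 0‖ / γ)) i l (fun _ _ => le_rfl)
    (by simpa using div_nonneg (norm_nonneg (F 0)) hγ.le)
  rw [Pi.zero_apply, Pi.zero_apply, zero_sub, neg_neg, mul_div_cancel₀ _ hγ.ne'] at hincr
  linarith [le_of_abs_le (abs_apply_apply_le_norm (F 0) i l)]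

theorem neg_norm_div_le_of_nonneg (hγ : 0 < γ) (hF : IsMonotoneSystem γ F)
    {v : Fin d → Fin N → ℝ} (hv : ∀ i l, 0 ≤ F v i l) : (fun _ _ => -(‖F 0‖ / γ)) ≤ v :=
  hF.le_of_forall_le_or_exists hγ fun i l =>
    .inl ((hF.const_neg_norm_div_nonpos hγ i l).trans (hv i l))

end IsMonotoneSystem

/-- A subsolution of the QVI with switching cost `c`: at every node the system is nonpositive or
the obstacle `M u` is reached or exceeded. The maximum in `M` is replaced by an existential
quantifier, which excludes the value `0` that `Mop` takes when `d = 1`. -/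
def IsQVISubsolution (F : (Fin d → Fin N → ℝ) → Fin d → Fin N → ℝ) (c : ℝ)
    (u : Fin d → Fin N → ℝ) : Prop :=
  ∀ i l, F u i l ≤ 0 ∨ ∃ j ≠ i, u i l ≤ u j l - c

/-- A supersolution of the QVI with switching cost `c`: the system is nonnegative and `v` lies
above its obstacle `M v`. The maximum in `M` is replaced by a universal quantifier. -/
def IsQVISupersolution (F : (Fin d → Fin N → ℝ) → Fin d → Fin N → ℝ) (c : ℝ)
    (v : Fin d → Fin N → ℝ) : Prop :=
  ∀ i l, 0 ≤ F v i l ∧ ∀ j ≠ i, v j l - c ≤ v i l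

/-- A solution of the QVI with switching cost `c`, meaningful for `2 ≤ d`. -/
def IsQVISolution (F : (Fin d → Fin N → ℝ) → Fin d → Fin N → ℝ) (c : ℝ)
    (u : Fin d → Fin N → ℝ) : Prop :=
  ∀ i l, min (F u i l) (u i l - Mop c u i l) = 0

/-- A solution of the penalized equation with penalty `π`, penalty parameter `ρ` and switching
cost `c`. -/
def IsPenalizedSolution (F : (Fin d → Fin N → ℝ) → Fin d → Fin N → ℝ) (π : ℝ → ℝ) (ρ c : ℝ)
    (w : Fin d → Fin N → ℝ) : Prop :=
  ∀ i l, F w i l - ρ * ∑ j ∈ Finset.univ.erase i, π (w j l - c - w i l) = 0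

namespace IsQVISolution

variable {c : ℝ} {u : Fin d → Fin N → ℝ}

theorem isQVISubsolution (hu : IsQVISolution F c u) (hd : 2 ≤ d) : IsQVISubsolution F c u := by
  intro i l
  have : Nontrivial (Fin d) := Fin.nontrivial_iff_two_le.2 hd
  have : Nonempty {j : Fin d // j ≠ i} := nonempty_subtype.2 (exists_ne i)
  refine (min_le_iff.1 (hu i l).le).imp_right fun hobstacle => ?_
  obtain ⟨⟨j, hj⟩, hmax⟩ :=
    exists_eq_ciSup_of_finite (f := fun j : {j : Fin d // j ≠ i} => u j l - c)
  exact ⟨j, hj, (sub_nonpos.1 hobstacle).trans_eq hmax.symm⟩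

theorem isQVISupersolution (hu : IsQVISolution F c u) : IsQVISupersolution F c u := by
  intro i l
  obtain ⟨hFu, hobstacle⟩ := le_min_iff.1 (hu i l).ge
  refine ⟨hFu, fun j hj => le_trans ?_ (sub_nonneg.1 hobstacle)⟩
  exact le_ciSup (f := fun j : {j : Fin d // j ≠ i} => u j l - c)
    (Set.finite_range _).bddAbove ⟨j, hj⟩

end IsQVISolution

theorem IsQVISubsolution.le_supersolution {c : ℝ} {u v : Fin d → Fin N → ℝ}
    (hu : IsQVISubsolution F c u) (hv : IsQVISupersolution F c v) (hγ : 0 < γ)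
    (hF : IsMonotoneSystem γ F) (hc : 0 < c) : u ≤ v := by
  refine hF.le_of_forall_le_or_exists hγ fun i l => ?_
  obtain ⟨hFv, hobstacle⟩ := hv i l
  refine (hu i l).imp hFv.trans' ?_
  rintro ⟨j, hj, huj⟩
  exact ⟨j, l, by linarith, by linarith [hobstacle j hj]⟩

namespace IsQVISupersolution

theorem mono {c c' : ℝ} {v : Fin d → Fin N → ℝ} (hv : IsQVISupersolution F c v) (hc : c ≤ c') :
    IsQVISupersolution F c' v := fun i l =>
  ⟨(hv i l).1, fun j hj => by linarith [(hv i l).2 j hj]⟩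

theorem const_norm_div (hγ : 0 < γ) (hF : IsMonotoneSystem γ F) :
    IsQVISupersolution F 0 (fun _ _ => ‖F 0‖ / γ) := fun i l =>
  ⟨hF.const_norm_div_nonneg hγ i l, fun _ _ => (sub_zero _).le⟩

theorem convex_combination (hF : IsConcaveSystem F) {θ c₁ c₂ : ℝ} (hθ₀ : 0 ≤ θ) (hθ₁ : θ ≤ 1)
    {v w : Fin d → Fin N → ℝ} (hv : IsQVISupersolution F c₁ v) (hw : IsQVISupersolution F c₂ w) :
    IsQVISupersolution F (θ * c₁ + (1 - θ) * c₂) (fun i l => θ * v i l + (1 - θ) * w i l) := by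
  intro i l
  have hθ₁' : 0 ≤ 1 - θ := sub_nonneg.2 hθ₁
  constructor
  · exact (add_nonneg (mul_nonneg hθ₀ (hv i l).1) (mul_nonneg hθ₁' (hw i l).1)).trans
      (hF i v w θ hθ₀ hθ₁ l)
  · intro j hj
    calc
      θ * v j l + (1 - θ) * w j l - (θ * c₁ + (1 - θ) * c₂)
          = θ * (v j l - c₁) + (1 - θ) * (w j l - c₂) := by ring
      _ ≤ θ * v i l + (1 - θ) * w i l := by
        gcongr
        exacts [(hv i l).2 j hj, (hw i l).2 j hj]

end IsQVISupersolution

namespace IsQVISubsolution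

variable {c : ℝ} {u : Fin d → Fin N → ℝ}

theorem le_norm_div (hu : IsQVISubsolution F c u) (hγ : 0 < γ) (hF : IsMonotoneSystem γ F)
    (hc : 0 < c) : u ≤ fun _ _ => ‖F 0‖ / γ :=
  hu.le_supersolution ((IsQVISupersolution.const_norm_div hγ hF).mono hc.le) hγ hF hc

theorem sub_le_of_supersolution_add (hu : IsQVISubsolution F c u) (hγ : 0 < γ)
    (hFmono : IsMonotoneSystem γ F) (hFconc : IsConcaveSystem F) (hc : 0 < c) {ε : ℝ}
    (hε : 0 ≤ ε) {w : Fin d → Fin N → ℝ} (hw : IsQVISupersolution F (c + ε) w)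
    (i : Fin d) (l : Fin N) : u i l - w i l ≤ ε / (c + ε) * (‖F 0‖ / γ - w i l) := by
  have hcε : 0 < c + ε := by linarith
  have hcost : ε / (c + ε) * 0 + (1 - ε / (c + ε)) * (c + ε) = c := by
    field_simp
    ring
  have hcomb := (IsQVISupersolution.const_norm_div hγ hFmono).convex_combination hFconc
    (div_nonneg hε hcε.le) ((div_le_one hcε).2 (by linarith)) hw
  rw [hcost] at hcomb
  linarith [hu.le_supersolution hcomb hγ hFmono hc i l]

end IsQVISubsolution

namespace IsPenalizedSolution

variable {π : ℝ → ℝ} {ρ c : ℝ} {w : Fin d → Fin N → ℝ}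

theorem mul_penalty_le (hw : IsPenalizedSolution F π ρ c w) (hρ : 0 ≤ ρ) (hπ : ∀ y, 0 ≤ π y)
    {i j : Fin d} (hj : j ≠ i) (l : Fin N) : ρ * π (w j l - c - w i l) ≤ F w i l := by
  rw [sub_eq_zero.1 (hw i l)]
  gcongr
  exact Finset.single_le_sum (f := fun j => π (w j l - c - w i l)) (fun _ _ => hπ _)
    (Finset.mem_erase.2 ⟨hj, Finset.mem_univ j⟩)

theorem nonneg (hw : IsPenalizedSolution F π ρ c w) (hρ : 0 ≤ ρ) (hπ : ∀ y, 0 ≤ π y)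
    (i : Fin d) (l : Fin N) : 0 ≤ F w i l := by
  rw [sub_eq_zero.1 (hw i l)]
  exact mul_nonneg hρ (Finset.sum_nonneg fun _ _ => hπ _)

theorem isQVISubsolution (hw : IsPenalizedSolution F π ρ c w) (hπ : ∀ y ≤ 0, π y = 0) :
    IsQVISubsolution F c w := by
  intro i l
  by_cases hviolated : ∃ j ≠ i, w i l ≤ w j l - c
  · exact .inr hviolated
  · push Not at hviolated
    left
    rw [sub_eq_zero.1 (hw i l), Finset.sum_eq_zero, mul_zero]
    exact fun j hj => hπ _ (sub_nonpos.2 (hviolated j (Finset.ne_of_mem_erase hj)).le)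

theorem norm_le (hw : IsPenalizedSolution F π ρ c w) (hγ : 0 < γ) (hF : IsMonotoneSystem γ F)
    (hπ_nonneg : ∀ y, 0 ≤ π y) (hπ_zero : ∀ y ≤ 0, π y = 0) (hρ : 0 ≤ ρ) (hc : 0 < c) :
    ‖w‖ ≤ ‖F 0‖ / γ :=
  norm_le_of_forall_abs_le (by positivity) fun i l => abs_le.2
    ⟨hF.neg_norm_div_le_of_nonneg hγ (hw.nonneg hρ hπ_nonneg) i l,
      (hw.isQVISubsolution hπ_zero).le_norm_div hγ hF hc i l⟩

theorem isQVISupersolution_add (hw : IsPenalizedSolution F π ρ c w) (hπ : ∀ y, 0 ≤ π y)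
    {τ σ R C : ℝ} (hτ : 0 < τ) (hσ : 0 < σ) (hρ : 0 < ρ) (hc : 0 ≤ c)
    (hπlow : ∀ y, 0 ≤ y → y ≤ 2 * R → τ * y ^ (1 / σ) ≤ π y)
    (hwR : ‖w‖ ≤ R) (hC : ‖F w‖ ≤ C) :
    IsQVISupersolution F (c + (C / (τ * ρ)) ^ σ) w := by
  refine fun i l => ⟨hw.nonneg hρ.le hπ i l, fun j hj => ?_⟩
  suffices hviolation : w j l - c - w i l ≤ (C / (τ * ρ)) ^ σ by linarith
  rcases le_total (w j l - c - w i l) 0 with hneg | hpos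
  · have hC₀ : 0 ≤ C := (norm_nonneg _).trans hC
    exact hneg.trans (by positivity)
  · have hrange : w j l - c - w i l ≤ 2 * R := by
      linarith [le_of_abs_le (abs_apply_apply_le_norm w j l),
        neg_le_of_abs_le (abs_apply_apply_le_norm w i l)]
    have hpenalty : π (w j l - c - w i l) ≤ C / ρ := by
      rw [le_div_iff₀' hρ]
      exact (hw.mul_penalty_le hρ.le hπ hj l).trans
        ((le_of_abs_le (abs_apply_apply_le_norm (F w) i l)).trans hC)
    rw [mul_comm τ, ← div_div]
    exact le_rpow_of_mul_rpow_one_div_le hτ hσ hpos ((hπlow _ hpos hrange).trans hpenalty)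

end IsPenalizedSolution

end

theorem penalty_error_bound_positive_cost_general {N d : ℕ} (hd : 2 ≤ d) {γ : ℝ} (hγ : 0 < γ)
    {F : (Fin d → Fin N → ℝ) → Fin d → Fin N → ℝ} (hFmono : IsMonotoneSystem γ F)
    (hFconc : IsConcaveSystem F) {π : ℝ → ℝ} (hπ_nonneg : ∀ y, 0 ≤ π y)
    (hπ_zero : ∀ y ≤ 0, π y = 0) {τ σ : ℝ} (hτ : 0 < τ) (hσ : 0 < σ)
    (hπlow : ∀ y, 0 ≤ y → y ≤ 2 * ‖F 0‖ / γ → τ * y ^ (1 / σ) ≤ π y) {c : ℝ} (hc : 0 < c)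
    {u : Fin d → Fin N → ℝ} (hu : IsQVISolution F c u) {ρ : ℝ} (hρ : 0 < ρ)
    {uρ : Fin d → Fin N → ℝ} (huρ : IsPenalizedSolution F π ρ c uρ) {C : ℝ}
    (hC : ∀ v, ‖v‖ ≤ ‖F 0‖ / γ → ‖F v‖ ≤ C) :
    uρ ≤ u ∧
      ‖u - uρ‖ ≤
        (C / (τ * ρ)) ^ σ / (c + (C / (τ * ρ)) ^ σ) * (2 * ‖F 0‖ / γ) := by
  have hle : uρ ≤ u :=
    (huρ.isQVISubsolution hπ_zero).le_supersolution hu.isQVISupersolution hγ hFmono hc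
  have huρ_norm : ‖uρ‖ ≤ ‖F 0‖ / γ := huρ.norm_le hγ hFmono hπ_nonneg hπ_zero hρ.le hc
  have huρ_super : IsQVISupersolution F (c + (C / (τ * ρ)) ^ σ) uρ :=
    huρ.isQVISupersolution_add hπ_nonneg hτ hσ hρ hc.le (by rwa [← mul_div_assoc]) huρ_norm
      (hC uρ huρ_norm)
  have hC₀ : 0 ≤ C := (norm_nonneg _).trans (hC uρ huρ_norm)
  set ε := (C / (τ * ρ)) ^ σ
  have hε : 0 ≤ ε := by positivity
  refine ⟨hle, norm_le_of_forall_abs_le (by positivity) fun i l => ?_⟩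
  calc
    |u i l - uρ i l| = u i l - uρ i l := abs_of_nonneg (sub_nonneg.2 (hle i l))
    _ ≤ ε / (c + ε) * (‖F 0‖ / γ - uρ i l) :=
      (hu.isQVISubsolution hd).sub_le_of_supersolution_add hγ hFmono hFconc hc hε huρ_super i l
    _ ≤ ε / (c + ε) * (2 * ‖F 0‖ / γ) := by
      gcongr
      rw [two_mul, add_div]
      linarith [neg_le_of_abs_le ((abs_apply_apply_le_norm uρ i l).trans huρ_norm)]

/-- Explicit penalty error bound for positive switching cost. -/
theorem penalty_error_bound_positive_cost {N d : ℕ} (hN : 1 ≤ N) (hd : 2 ≤ d)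
    (γ : ℝ) (hγ : 0 < γ)
    (F : (Fin d → Fin N → ℝ) → Fin d → Fin N → ℝ)
    (hFcont : Continuous F) (hFmono : IsMonotoneSystem γ F)
    (hFconc : IsConcaveSystem F)
    (π : ℝ → ℝ) (hπ : IsPenaltyFunction π)
    (τ σ : ℝ) (hτ : 0 < τ) (hσ : 0 < σ)
    (hπlow : ∀ y : ℝ, 0 ≤ y → y ≤ 2 * supNorm (F 0) / γ → τ * y ^ (1 / σ) ≤ π y)
    (c : ℝ) (hc : 0 < c)
    (u : Fin d → Fin N → ℝ)
    (hu : ∀ i l, min (F u i l) (u i l - Mop c u i l) = 0)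
    (ρ : ℝ) (hρ : 0 < ρ)
    (uρ : Fin d → Fin N → ℝ)
    (huρ : ∀ i l, F uρ i l - ρ * ∑ j ∈ Finset.univ.erase i, π (uρ j l - c - uρ i l) = 0) :
    (∀ i l, uρ i l ≤ u i l) ∧
    ∀ κ : ℝ, 0 < κ → κ < c → ∀ n : ℕ,
      supNorm (fun i l => u i l - uρ i l) ≤
        (2 * supNorm (F 0) + κ) / γ *
          (1 - min 1 (κ / ((2 * supNorm (F 0) + κ) / γ))) ^ n /
          min 1 (κ / ((2 * supNorm (F 0) + κ) / γ)) +
        (sSup ((fun v => supNorm (F v)) '' {v | supNorm v ≤ supNorm (F 0) / γ}) / (τ * ρ)) ^ σ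
          * n := by
  simp only [supNorm_eq_norm] at hπlow ⊢
  have hC (v : Fin d → Fin N → ℝ) (hv : ‖v‖ ≤ ‖F 0‖ / γ) :
      ‖F v‖ ≤ sSup ((fun w => ‖F w‖) '' {w | ‖w‖ ≤ ‖F 0‖ / γ}) :=
    norm_le_sSup_image_of_continuous hFcont hv
  have hC₀ := (norm_nonneg _).trans (hC 0 (by rw [norm_zero]; positivity))
  obtain ⟨hle, hbound⟩ := penalty_error_bound_positive_cost_general hd hγ hFmono hFconc
    hπ.nonneg hπ.2.2.1 hτ hσ hπlow hc hu hρ huρ hC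
  refine ⟨hle, fun κ hκ hκc n => hbound.trans ?_⟩
  exact div_add_mul_le_mul_one_sub_pow_div_add_mul (by positivity) (by gcongr; linarith)
    (by positivity) hκ hκc.le (by positivity) n
end
end
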